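/- (Strong converse.) For any ε ∈ (0,1), any α > 0 and any pair of distributions (P1,P2) on a finite alphabet X with V(P1,P2,α) > 0, the limit lim_{n→∞} λ*(n,α,ε|P1,P2) exists and equals GJS(P1,P2,α). -/

import Mathlib

open Filter Topology MeasureTheory

namespace Classification

variable {X : Type*} [Fintype X] [DecidableEq X]

/-- `P` is a probability mass function on the finite alphabet `X`. -/
def IsDist (P : X → ℝ) : Prop := (∀ x, 0 ≤ P x) ∧ ∑ x, P x = 1

/-- `P` has full support. -/
def FullSupport (P : X → ℝ) : Prop := ∀ x, 0 < P x

/-- Empirical distribution (type) of a sequence `x : Fin m → X`. -/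
noncomputable def empDist {m : ℕ} (x : Fin m → X) : X → ℝ :=
  fun a => ((Finset.univ.filter fun i => x i = a).card : ℝ) / m

/-- Real-valued KL divergence with the usual `0 · log 0 = 0` convention. -/
noncomputable def klDivR (Q P : X → ℝ) : ℝ := ∑ x, Q x * Real.log (Q x / P x)

open Classical in
/-- Extended-real-valued KL divergence: `⊤` when `Q` is not absolutely continuous w.r.t. `P`. -/
noncomputable def klDivE (Q P : X → ℝ) : EReal :=
  if ∀ x, P x = 0 → Q x = 0 then ((klDivR Q P : ℝ) : EReal) else ⊤

/-- The mixture `(α P1 + P2) / (1 + α)`. -/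
noncomputable def mix (P1 P2 : X → ℝ) (α : ℝ) : X → ℝ :=
  fun x => (α * P1 x + P2 x) / (1 + α)

/-- Generalized Jensen–Shannon divergence
`GJS(P1,P2,α) = α D(P1 ‖ (αP1+P2)/(1+α)) + D(P2 ‖ (αP1+P2)/(1+α))`. -/
noncomputable def GJS (P1 P2 : X → ℝ) (α : ℝ) : ℝ :=
  α * klDivR P1 (mix P1 P2 α) + klDivR P2 (mix P1 P2 α)

/-- Training sequence length `N = ⌈α n⌉`. -/
noncomputable def trainLen (α : ℝ) (n : ℕ) : ℕ := ⌈α * (n : ℝ)⌉₊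

/-- Probability of observing the sequence `x` under i.i.d. sampling from `P`. -/
noncomputable def seqProb (P : X → ℝ) {m : ℕ} (x : Fin m → X) : ℝ := ∏ i, P (x i)

/-- A binary classification test: output `true` means "declare H₂",
`false` means "declare H₁". -/
abbrev BTest (X : Type*) (α : ℝ) (n : ℕ) : Type _ :=
  (Fin (trainLen α n) → X) → (Fin (trainLen α n) → X) → (Fin n → X) → Bool

/-- Type-I error probability: probability of declaring `H₂` when `Y^n ~ P1` (hypothesis H₁). -/
noncomputable def beta1 {α : ℝ} {n : ℕ} (φ : BTest X α n) (P1 P2 : X → ℝ) : ℝ :=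
  ∑ x1 : Fin (trainLen α n) → X, ∑ x2 : Fin (trainLen α n) → X, ∑ y : Fin n → X,
    if φ x1 x2 y = true then seqProb P1 x1 * seqProb P2 x2 * seqProb P1 y else 0

/-- Type-II error probability: probability of declaring `H₁` when `Y^n ~ P2` (hypothesis H₂). -/
noncomputable def beta2 {α : ℝ} {n : ℕ} (φ : BTest X α n) (P1 P2 : X → ℝ) : ℝ :=
  ∑ x1 : Fin (trainLen α n) → X, ∑ x2 : Fin (trainLen α n) → X, ∑ y : Fin n → X,
    if φ x1 x2 y = false then seqProb P1 x1 * seqProb P2 x2 * seqProb P2 y else 0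

open Classical in
/-- Gutman's test with threshold `lam`: declare `H₁` iff `GJS(T̂_{x₁}, T̂_y, α) ≤ lam`. -/
noncomputable def gutman (α lam : ℝ) (n : ℕ) : BTest X α n :=
  fun x1 _ y => if GJS (empDist x1) (empDist y) α ≤ lam then false else true

open Classical in
/-- `- log x` as an extended real, with `⊤` at `x = 0`. -/
noncomputable def negLogE (x : ℝ) : EReal :=
  if x = 0 then ⊤ else ((-Real.log x : ℝ) : EReal)

/-- Gutman's exponent function
`F(P1,P2,α,lam) = min { α D(Q1‖P1) + D(Q2‖P2) : GJS(Q1,Q2,α) ≤ lam }` (as an inf in `EReal`). -/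
noncomputable def Fexp (P1 P2 : X → ℝ) (α lam : ℝ) : EReal :=
  sInf {v : EReal | ∃ Q1 Q2 : X → ℝ, IsDist Q1 ∧ IsDist Q2 ∧ GJS Q1 Q2 α ≤ lam ∧
    v = (α : EReal) * klDivE Q1 P1 + klDivE Q2 P2}

/-- Expectation of `f` under `P`. -/
noncomputable def expect (P : X → ℝ) (f : X → ℝ) : ℝ := ∑ x, P x * f x

/-- Variance of `f` under `P`. -/
noncomputable def varD (P : X → ℝ) (f : X → ℝ) : ℝ :=
  expect P (fun x => (f x - expect P f) ^ 2)

/-- Information density `ı₁(x) = log((1+α) P1(x) / (α P1(x) + P2(x)))`. -/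
noncomputable def iDens1 (P1 P2 : X → ℝ) (α : ℝ) (x : X) : ℝ :=
  Real.log ((1 + α) * P1 x / (α * P1 x + P2 x))

/-- Information density `ı₂(x) = log((1+α) P2(x) / (α P1(x) + P2(x)))`. -/
noncomputable def iDens2 (P1 P2 : X → ℝ) (α : ℝ) (x : X) : ℝ :=
  Real.log ((1 + α) * P2 x / (α * P1 x + P2 x))

/-- The dispersion `V(P1,P2,α) = α Var_{P1}[ı₁] + Var_{P2}[ı₂]`. -/
noncomputable def disp (P1 P2 : X → ℝ) (α : ℝ) : ℝ :=
  α * varD P1 (iDens1 P1 P2 α) + varD P2 (iDens2 P1 P2 α)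

/-- The standard Gaussian cumulative distribution function `Φ`. -/
noncomputable def stdCDF (x : ℝ) : ℝ :=
  (Real.sqrt (2 * Real.pi))⁻¹ * ∫ t in Set.Iic x, Real.exp (-t ^ 2 / 2)

/-- The inverse standard Gaussian cdf `Φ⁻¹`. -/
noncomputable def stdCDFInv (p : ℝ) : ℝ := sInf {x : ℝ | p ≤ stdCDF x}

/-- The non-asymptotic fundamental limit `λ*(n, α, ε | P1, P2)` for binary classification. -/
noncomputable def lamStar (α : ℝ) (n : ℕ) (ε : ℝ) (P1 P2 : X → ℝ) : ℝ :=
  sSup {lam : ℝ | 0 ≤ lam ∧ ∃ φ : BTest X α n,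
    (∀ Q1 Q2 : X → ℝ, IsDist Q1 → IsDist Q2 →
      beta1 φ Q1 Q2 ≤ Real.exp (-((n : ℝ) * lam))) ∧
    beta2 φ P1 P2 ≤ ε}

/-- Rényi divergence of order `γ`. -/
noncomputable def renyi (γ : ℝ) (P1 P2 : X → ℝ) : ℝ :=
  (1 / (γ - 1)) * Real.log (∑ x, P1 x ^ γ * P2 x ^ (1 - γ))

/-- The fundamental limit `τ*(n, α, ε | φ_n^Gut, P1, P2)` in the dual setting for Gutman's test. -/
noncomputable def tauStarGut (α : ℝ) (n : ℕ) (ε : ℝ) (P1 P2 : X → ℝ) : ℝ :=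
  sSup {τ : ℝ | 0 ≤ τ ∧ ∃ lam : ℝ, 0 ≤ lam ∧
    (∀ Q1 Q2 : X → ℝ, IsDist Q1 → IsDist Q2 →
      beta1 (gutman α lam n) Q1 Q2 ≤ ε) ∧
    beta2 (gutman α lam n) P1 P2 ≤ Real.exp (-((n : ℝ) * τ))}

/-- A two-sample homogeneity test: `true` means "declare H₂" (different distributions). -/
abbrev TTest (X : Type*) (α : ℝ) (n : ℕ) : Type _ :=
  (Fin (trainLen α n) → X) → (Fin n → X) → Bool

/-- False-alarm probability of a two-sample test. -/
noncomputable def betaFA {α : ℝ} {n : ℕ} (φ : TTest X α n) (P1 : X → ℝ) : ℝ :=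
  ∑ x : Fin (trainLen α n) → X, ∑ y : Fin n → X,
    if φ x y = true then seqProb P1 x * seqProb P1 y else 0

/-- Miss-detection probability of a two-sample test. -/
noncomputable def betaMD {α : ℝ} {n : ℕ} (φ : TTest X α n) (P1 P2 : X → ℝ) : ℝ :=
  ∑ x : Fin (trainLen α n) → X, ∑ y : Fin n → X,
    if φ x y = false then seqProb P1 x * seqProb P2 y else 0

/-- The fundamental limit `ξ*(n, α, ε | P1, P2)` for two-sample homogeneity testing. -/
noncomputable def xiStar (α : ℝ) (n : ℕ) (ε : ℝ) (P1 P2 : X → ℝ) : ℝ :=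
  sSup {lam : ℝ | 0 ≤ lam ∧ ∃ φ : TTest X α n,
    (∀ Q1 : X → ℝ, IsDist Q1 → betaFA φ Q1 ≤ Real.exp (-((n : ℝ) * lam))) ∧
    betaMD φ P1 P2 ≤ ε}

/-- An M-ary classification test with the rejection option: `some j` means "declare H_j",
`none` means "reject". -/
abbrev MTest (X : Type*) (M : ℕ) (α : ℝ) (n : ℕ) : Type _ :=
  (Fin M → Fin (trainLen α n) → X) → (Fin n → X) → Option (Fin M)

/-- Type-`j` error probability: probability of declaring some hypothesis other than
`H_j` or rejection, under `H_j`. -/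
noncomputable def betaM {M : ℕ} {α : ℝ} {n : ℕ} (ψ : MTest X M α n)
    (P : Fin M → X → ℝ) (j : Fin M) : ℝ :=
  ∑ xs : Fin M → Fin (trainLen α n) → X, ∑ y : Fin n → X,
    if ψ xs y ≠ some j ∧ ψ xs y ≠ none then
      (∏ i, seqProb (P i) (xs i)) * seqProb (P j) y else 0

/-- Type-`j` rejection probability: probability of rejecting under `H_j`. -/
noncomputable def zetaM {M : ℕ} {α : ℝ} {n : ℕ} (ψ : MTest X M α n)
    (P : Fin M → X → ℝ) (j : Fin M) : ℝ :=
  ∑ xs : Fin M → Fin (trainLen α n) → X, ∑ y : Fin n → X,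
    if ψ xs y = none then (∏ i, seqProb (P i) (xs i)) * seqProb (P j) y else 0

/-- The fundamental limit `λ*(n, α, ε | P)` for M-ary classification with rejection. -/
noncomputable def lamStarM (M : ℕ) (α : ℝ) (n : ℕ) (ε : Fin M → ℝ)
    (P : Fin M → X → ℝ) : ℝ :=
  sSup {lam : ℝ | 0 ≤ lam ∧ ∃ ψ : MTest X M α n,
    (∀ Q : Fin M → X → ℝ, (∀ i, IsDist (Q i)) → ∀ j,
      betaM ψ Q j ≤ Real.exp (-((n : ℝ) * lam))) ∧
    (∀ j, zetaM ψ P j ≤ ε j)}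

open Classical in
/-- Gutman's M-ary test with rejection and threshold `lam`. -/
noncomputable def gutmanM (M : ℕ) [NeZero M] (α lam : ℝ) (n : ℕ) : MTest X M α n :=
  fun xs y =>
    if ∃ i k : Fin M, i ≠ k ∧ GJS (empDist (xs i)) (empDist y) α ≤ lam ∧
        GJS (empDist (xs k)) (empDist y) α ≤ lam then none
    else if h : ∃ j : Fin M, GJS (empDist (xs j)) (empDist y) α ≤ lam then some h.choose
    else some 0

/-- The fundamental limit `τ*(n, α, ε | Ψ_n^Gut, P)` in the dual setting for
Gutman's M-ary test. -/
noncomputable def tauStarGutM (M : ℕ) [NeZero M] (α : ℝ) (n : ℕ) (ε : ℝ)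
    (P : Fin M → X → ℝ) : ℝ :=
  sSup {τ : ℝ | 0 ≤ τ ∧ ∃ lam : ℝ, 0 ≤ lam ∧
    (∀ Q : Fin M → X → ℝ, (∀ i, IsDist (Q i)) → ∀ j,
      betaM (gutmanM M α lam n) Q j ≤ ε) ∧
    (∀ j, zetaM (gutmanM M α lam n) P j ≤ Real.exp (-((n : ℝ) * τ)))}

/-- Generalized divergence of three distributions
`D_γ(P1,P2,P3) = (γ-1)⁻¹ log Σ_x P1(x)^{1-γ} P2(x)^{γ/2} P3(x)^{γ/2}`. -/
noncomputable def genDiv (γ : ℝ) (P1 P2 P3 : X → ℝ) : ℝ :=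
  (1 / (γ - 1)) * Real.log (∑ x, P1 x ^ (1 - γ) * P2 x ^ (γ / 2) * P3 x ^ (γ / 2))

/-- A binary classification test with the rejection option: `some 0` means "declare H₁",
`some 1` means "declare H₂", `none` means "reject". -/
abbrev RTest (X : Type*) (α : ℝ) (n : ℕ) : Type _ :=
  (Fin (trainLen α n) → X) → (Fin (trainLen α n) → X) → (Fin n → X) → Option (Fin 2)

/-- Type-1 error probability of a rejection test: declare `H₂` under `H₁`. -/
noncomputable def beta1R {α : ℝ} {n : ℕ} (ψ : RTest X α n) (P1 P2 : X → ℝ) : ℝ :=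
  ∑ x1 : Fin (trainLen α n) → X, ∑ x2 : Fin (trainLen α n) → X, ∑ y : Fin n → X,
    if ψ x1 x2 y = some 1 then seqProb P1 x1 * seqProb P2 x2 * seqProb P1 y else 0

/-- Type-2 error probability of a rejection test: declare `H₁` under `H₂`. -/
noncomputable def beta2R {α : ℝ} {n : ℕ} (ψ : RTest X α n) (P1 P2 : X → ℝ) : ℝ :=
  ∑ x1 : Fin (trainLen α n) → X, ∑ x2 : Fin (trainLen α n) → X, ∑ y : Fin n → X,
    if ψ x1 x2 y = some 0 then seqProb P1 x1 * seqProb P2 x2 * seqProb P2 y else 0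

open Classical in
/-- Type-`j` rejection probability of a binary rejection test. -/
noncomputable def zetaR {α : ℝ} {n : ℕ} (ψ : RTest X α n) (P1 P2 : X → ℝ) (j : Fin 2) : ℝ :=
  ∑ x1 : Fin (trainLen α n) → X, ∑ x2 : Fin (trainLen α n) → X, ∑ y : Fin n → X,
    if ψ x1 x2 y = none then
      seqProb P1 x1 * seqProb P2 x2 * seqProb (if j = 0 then P1 else P2) y else 0

/-- A binary test is type-based if it depends on the data only through the
triple of empirical distributions. -/
def TypeBasedB {α : ℝ} {n : ℕ} (φ : BTest X α n) : Prop :=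
  ∀ x1 x1' x2 x2' : Fin (trainLen α n) → X, ∀ y y' : Fin n → X,
    empDist x1 = empDist x1' → empDist x2 = empDist x2' → empDist y = empDist y' →
      φ x1 x2 y = φ x1' x2' y'

/-- An M-ary test is type-based if it depends on the data only through the
tuple of empirical distributions. -/
def TypeBasedM {M : ℕ} {α : ℝ} {n : ℕ} (ψ : MTest X M α n) : Prop :=
  ∀ xs xs' : Fin M → Fin (trainLen α n) → X, ∀ y y' : Fin n → X,
    (∀ i, empDist (xs i) = empDist (xs' i)) → empDist y = empDist y' →
      ψ xs y = ψ xs' y'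

open Classical in
/-- Probability of an event under hypothesis `H₂` in the binary setup. -/
noncomputable def prH2E (α : ℝ) (n : ℕ) (P1 P2 : X → ℝ)
    (E : (Fin (trainLen α n) → X) → (Fin (trainLen α n) → X) → (Fin n → X) → Prop) : ℝ :=
  ∑ x1 : Fin (trainLen α n) → X, ∑ x2 : Fin (trainLen α n) → X, ∑ y : Fin n → X,
    if E x1 x2 y then seqProb P1 x1 * seqProb P2 x2 * seqProb P2 y else 0

open Classical in
/-- Probability of an event under hypothesis `H_j` in the M-ary setup. -/
noncomputable def prHjM (M : ℕ) (α : ℝ) (n : ℕ) (P : Fin M → X → ℝ) (j : Fin M)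
    (E : (Fin M → Fin (trainLen α n) → X) → (Fin n → X) → Prop) : ℝ :=
  ∑ xs : Fin M → Fin (trainLen α n) → X, ∑ y : Fin n → X,
    if E xs y then (∏ i, seqProb (P i) (xs i)) * seqProb (P j) y else 0

/-- `η_n(α) = |X| log(n+1)/n + 2|X| log(1+αn)/(αn)`. -/
noncomputable def etaN (X : Type*) [Fintype X] (α : ℝ) (n : ℕ) : ℝ :=
  (Fintype.card X : ℝ) * Real.log ((n : ℝ) + 1) / n +
    2 * (Fintype.card X : ℝ) * Real.log (1 + α * n) / (α * n)

/-- `η_{n,M} = M |X| log(nα+1)/(nα) + |X| log(n+1)/n`. -/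
noncomputable def etaNM (X : Type*) [Fintype X] (M : ℕ) (α : ℝ) (n : ℕ) : ℝ :=
  (M : ℝ) * (Fintype.card X : ℝ) * Real.log ((n : ℝ) * α + 1) / ((n : ℝ) * α) +
    (Fintype.card X : ℝ) * Real.log ((n : ℝ) + 1) / n

/-- `Q` is an `m`-type: the empirical distribution of some sequence of length `m`. -/
def IsTypeDist (m : ℕ) (Q : X → ℝ) : Prop := ∃ x : Fin m → X, empDist x = Q

/-- The type-restricted exponent function `F_n`. -/
noncomputable def Fn (n : ℕ) (P1 P2 : X → ℝ) (α lam : ℝ) : ℝ :=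
  sInf {v : ℝ | ∃ Q1 Q2 : X → ℝ, IsTypeDist (trainLen α n) Q1 ∧ IsTypeDist n Q2 ∧
    GJS Q1 Q2 α ≤ lam ∧ v = α * klDivR Q1 P1 + klDivR Q2 P2}

/-- The second smallest value of a finite family of reals:
`min_{i ≠ j} max (v i) (v j)`. -/
noncomputable def secondMin {M : ℕ} (v : Fin M → ℝ) : ℝ :=
  sInf {t : ℝ | ∃ i j : Fin M, i ≠ j ∧ t = max (v i) (v j)}

/-- The tilted distribution `P^{(γ)}` with `γ = α/(1+α)`. -/
noncomputable def tilt (α : ℝ) (P1 P2 : X → ℝ) : X → ℝ :=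
  fun x => P1 x ^ (α / (1 + α)) * P2 x ^ (1 / (1 + α)) /
    ∑ a, P1 a ^ (α / (1 + α)) * P2 a ^ (1 / (1 + α))

/-!
Both halves rest on a change of measure between `P1^N × P2^n` and `Q^N × Q^n`. If the two sequences
are strongly typical for `P1` and `P2`, then `-log (Q^N × Q^n)` is, up to a factor `1 ± η`, equal to
`n (α H(P1, Q) + H(P2, Q)) = n (1 + α) H(M, Q)` with `M = mix P1 P2 α` and `H(·, ·)` the cross
entropy. By Gibbs' inequality this is smallest at `Q = M`, where it exceeds `-log (P1^N × P2^n)` by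
`n GJS(P1, P2, α)`. Comparing with `M` alone bounds the exponent of every test, since the type-I
error must be small under `(M, P2)`; the uniformity in `Q` shows that the test which declares `H₂`
on the typical sequences attains the bound. Typical sequences carry almost all the mass, so both
bounds hold for every `ε ∈ (0, 1)`.
-/

section Divergence

variable {𝒳 : Type*} [Fintype 𝒳] {P Q P1 P2 : 𝒳 → ℝ} {α : ℝ}

lemma IsDist.le_one (hP : IsDist P) (a : 𝒳) : P a ≤ 1 :=
  hP.2 ▸ Finset.single_le_sum (fun b _ => hP.1 b) (Finset.mem_univ a)

lemma IsDist.mix (hα : 0 < α) (h1 : IsDist P1) (h2 : IsDist P2) : IsDist (mix P1 P2 α) := by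
  refine ⟨fun a => ?_, ?_⟩
  · have := h1.1 a
    have := h2.1 a
    unfold Classification.mix
    positivity
  · simp only [Classification.mix, ← Finset.sum_div, Finset.sum_add_distrib, ← Finset.mul_sum,
      h1.2, h2.2]
    rw [mul_one, add_comm, div_self (by positivity)]

omit [Fintype 𝒳] in
lemma mix_eq_zero_iff (hα : 0 < α) {a : 𝒳} (h1 : 0 ≤ P1 a) (h2 : 0 ≤ P2 a) :
    mix P1 P2 α a = 0 ↔ P1 a = 0 ∧ P2 a = 0 := by
  rw [mix, div_eq_zero_iff, or_iff_left (by positivity : 1 + α ≠ 0),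
    add_eq_zero_iff_of_nonneg (by positivity) h2, mul_eq_zero, or_iff_right hα.ne']

/-- The cross entropy `H(P, Q) = -∑ P log Q`, the rate of `-log Q^m` along `P`-typical sequences.
It is meaningful only for `P ≪ Q`: because `log 0 = 0`, symbols with `Q a = 0` contribute `0`. -/
noncomputable def crossEntropy (P Q : 𝒳 → ℝ) : ℝ := -∑ a, P a * Real.log (Q a)

lemma crossEntropy_eq_sum (P Q : 𝒳 → ℝ) :
    crossEntropy P Q = ∑ a, P a * -Real.log (Q a) := by
  simp only [crossEntropy, mul_neg, Finset.sum_neg_distrib]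

lemma IsDist.neg_log_nonneg (hQ : IsDist Q) (a : 𝒳) : 0 ≤ -Real.log (Q a) :=
  neg_nonneg.2 (Real.log_nonpos (hQ.1 a) (hQ.le_one a))

lemma crossEntropy_nonneg (hP : IsDist P) (hQ : IsDist Q) : 0 ≤ crossEntropy P Q := by
  rw [crossEntropy_eq_sum]
  exact Finset.sum_nonneg fun a _ => mul_nonneg (hP.1 a) (hQ.neg_log_nonneg a)

lemma crossEntropy_mix (hα : 0 < α) (P1 P2 Q : 𝒳 → ℝ) :
    (1 + α) * crossEntropy (mix P1 P2 α) Q = α * crossEntropy P1 Q + crossEntropy P2 Q := by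
  simp only [crossEntropy_eq_sum, Finset.mul_sum, ← Finset.sum_add_distrib]
  refine Finset.sum_congr rfl fun a _ => ?_
  unfold mix
  field_simp
  ring

lemma klDivR_eq_crossEntropy_sub (hPQ : ∀ a, Q a = 0 → P a = 0) :
    klDivR P Q = crossEntropy P Q - crossEntropy P P := by
  simp only [klDivR, crossEntropy_eq_sum, ← Finset.sum_sub_distrib]
  refine Finset.sum_congr rfl fun a _ => ?_
  by_cases hP : P a = 0
  · simp [hP]
  · rw [Real.log_div hP (mt (hPQ a) hP)]
    ring

lemma klDivR_nonneg (hP : IsDist P) (hQ : IsDist Q) (hPQ : ∀ a, Q a = 0 → P a = 0) :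
    0 ≤ klDivR P Q := by
  have hsum : ∑ a, (P a - Q a) = 0 := by rw [Finset.sum_sub_distrib, hP.2, hQ.2, sub_self]
  rw [← hsum]
  refine Finset.sum_le_sum fun a _ => ?_
  rcases (hP.1 a).eq_or_lt with h0 | hPpos
  · simpa [← h0] using hQ.1 a
  · have hQpos : 0 < Q a := (hQ.1 a).lt_of_ne' (mt (hPQ a) hPpos.ne')
    calc P a - Q a = P a * (1 - (P a / Q a)⁻¹) := by field_simp
      _ ≤ P a * Real.log (P a / Q a) := by
        gcongr
        exact Real.one_sub_inv_le_log_of_pos (by positivity)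

lemma crossEntropy_self_le (hP : IsDist P) (hQ : IsDist Q) (hPQ : ∀ a, Q a = 0 → P a = 0) :
    crossEntropy P P ≤ crossEntropy P Q := by
  rw [← sub_nonneg, ← klDivR_eq_crossEntropy_sub hPQ]
  exact klDivR_nonneg hP hQ hPQ

lemma left_eq_zero_of_mix_eq_zero (hα : 0 < α) (h1 : IsDist P1) (h2 : IsDist P2) (a : 𝒳)
    (ha : mix P1 P2 α a = 0) : P1 a = 0 :=
  ((mix_eq_zero_iff hα (h1.1 a) (h2.1 a)).1 ha).1

lemma right_eq_zero_of_mix_eq_zero (hα : 0 < α) (h1 : IsDist P1) (h2 : IsDist P2) (a : 𝒳)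
    (ha : mix P1 P2 α a = 0) : P2 a = 0 :=
  ((mix_eq_zero_iff hα (h1.1 a) (h2.1 a)).1 ha).2

lemma GJS_nonneg (hα : 0 < α) (h1 : IsDist P1) (h2 : IsDist P2) : 0 ≤ GJS P1 P2 α := by
  have hM := h1.mix hα h2
  have := klDivR_nonneg h1 hM (left_eq_zero_of_mix_eq_zero hα h1 h2)
  have := klDivR_nonneg h2 hM (right_eq_zero_of_mix_eq_zero hα h1 h2)
  unfold GJS
  positivity

lemma GJS_eq_crossEntropy_sub (hα : 0 < α) (h1 : IsDist P1) (h2 : IsDist P2) :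
    GJS P1 P2 α =
      (α * crossEntropy P1 (mix P1 P2 α) + crossEntropy P2 (mix P1 P2 α)) -
        (α * crossEntropy P1 P1 + crossEntropy P2 P2) := by
  rw [GJS, klDivR_eq_crossEntropy_sub (left_eq_zero_of_mix_eq_zero hα h1 h2),
    klDivR_eq_crossEntropy_sub (right_eq_zero_of_mix_eq_zero hα h1 h2)]
  ring

end Divergence

section SequenceProbability

variable {𝒳 : Type*} {P : 𝒳 → ℝ} {m : ℕ}

lemma seqProb_cons (P : 𝒳 → ℝ) (a : 𝒳) (x : Fin m → 𝒳) :
    seqProb P (Fin.cons a x : Fin (m + 1) → 𝒳) = P a * seqProb P x := by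
  simp only [seqProb, Fin.prod_univ_succ, Fin.cons_zero, Fin.cons_succ]

variable [Fintype 𝒳]

lemma seqProb_nonneg (hP : IsDist P) (x : Fin m → 𝒳) : 0 ≤ seqProb P x :=
  Finset.prod_nonneg fun i _ => hP.1 (x i)

lemma sum_fin_cons {M : Type*} [AddCommMonoid M] (F : (Fin (m + 1) → 𝒳) → M) :
    ∑ x, F x = ∑ a : 𝒳, ∑ x : Fin m → 𝒳, F (Fin.cons a x) := by
  rw [← Fintype.sum_prod_type']
  exact (Equiv.sum_comp (Fin.consEquiv fun _ : Fin (m + 1) => 𝒳) F).symm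

lemma sum_seqProb (hP : IsDist P) (m : ℕ) : ∑ x : Fin m → 𝒳, seqProb P x = 1 := by
  induction m with
  | zero => simp [seqProb]
  | succ m ih => simp only [sum_fin_cons, seqProb_cons, ← Finset.mul_sum, ih, mul_one, hP.2]

lemma expect_sub_expect (hP : IsDist P) (f : 𝒳 → ℝ) :
    expect P (fun a => f a - expect P f) = 0 := by
  simp only [expect, mul_sub, Finset.sum_sub_distrib, ← Finset.sum_mul, hP.2, one_mul, sub_self]

lemma sum_seqProb_mul_sq (hP : IsDist P) {g : 𝒳 → ℝ} (hg : expect P g = 0) (m : ℕ) :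
    ∑ x : Fin m → 𝒳, seqProb P x * (∑ i, g (x i)) ^ 2 = m * expect P fun a => g a ^ 2 := by
  induction m with
  | zero => simp
  | succ m ih =>
    have hcons (a : 𝒳) : ∑ x : Fin m → 𝒳, P a * seqProb P x * (g a + ∑ i, g (x i)) ^ 2 =
        P a * g a ^ 2 + P a * g a * (2 * ∑ x : Fin m → 𝒳, seqProb P x * ∑ i, g (x i)) +
          P a * (m * expect P fun a => g a ^ 2) := by
      calc _ = ∑ x : Fin m → 𝒳, (P a * g a ^ 2 * seqProb P x +
              P a * g a * (2 * (seqProb P x * ∑ i, g (x i))) +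
              P a * (seqProb P x * (∑ i, g (x i)) ^ 2)) :=
            Finset.sum_congr rfl fun x _ => by ring
        _ = _ := by
          simp only [Finset.sum_add_distrib, ← Finset.mul_sum, sum_seqProb hP, mul_one, ih]
    have hmean : ∑ a, P a * g a = 0 := hg
    simp only [sum_fin_cons, seqProb_cons, Fin.sum_univ_succ, Fin.cons_zero, Fin.cons_succ, hcons,
      Finset.sum_add_distrib, ← Finset.sum_mul, hmean, hP.2, expect]
    push_cast
    ring

lemma sum_seqProb_mul_sq_sub_expect (hP : IsDist P) (f : 𝒳 → ℝ) (m : ℕ) :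
    ∑ x : Fin m → 𝒳, seqProb P x * (∑ i, (f (x i) - expect P f)) ^ 2 = m * varD P f :=
  sum_seqProb_mul_sq hP (expect_sub_expect hP f) m

/-- The probability of the event `S` under i.i.d. sampling from `P`. -/
noncomputable def seqMass (P : 𝒳 → ℝ) (S : Set (Fin m → 𝒳)) : ℝ :=
  ∑ x, S.indicator (seqProb P) x

lemma seqMass_nonneg (hP : IsDist P) (S : Set (Fin m → 𝒳)) : 0 ≤ seqMass P S :=
  Finset.sum_nonneg fun x _ => Set.indicator_nonneg (fun z _ => seqProb_nonneg hP z) x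

lemma seqMass_iUnion_le {ι : Type*} [Fintype ι] (hP : IsDist P) (S : ι → Set (Fin m → 𝒳)) :
    seqMass P (⋃ j, S j) ≤ ∑ j, seqMass P (S j) := by
  unfold seqMass
  rw [Finset.sum_comm]
  refine Finset.sum_le_sum fun x _ => ?_
  have hnonneg (j : ι) : 0 ≤ (S j).indicator (seqProb P) x :=
    Set.indicator_nonneg (fun z _ => seqProb_nonneg hP z) x
  refine Set.indicator_apply_le' (fun hx => ?_) fun _ => Finset.sum_nonneg fun j _ => hnonneg j
  obtain ⟨j, hj⟩ := Set.mem_iUnion.1 hx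
  calc seqProb P x = (S j).indicator (seqProb P) x := (Set.indicator_of_mem hj _).symm
    _ ≤ _ := Finset.single_le_sum (fun k _ => hnonneg k) (Finset.mem_univ j)

lemma seqMass_chebyshev (hP : IsDist P) (f : 𝒳 → ℝ) {δ : ℝ} (hδ : 0 < δ) (m : ℕ) :
    seqMass P {x : Fin m → 𝒳 | δ < |∑ i, (f (x i) - expect P f)|} ≤ m * varD P f / δ ^ 2 := by
  rw [← sum_seqProb_mul_sq_sub_expect hP f m, Finset.sum_div]
  refine Finset.sum_le_sum fun x _ => ?_
  have hx := seqProb_nonneg hP x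
  refine Set.indicator_apply_le' (fun hdev => ?_) fun _ => by positivity
  rw [le_div_iff₀ (by positivity), ← sq_abs (∑ i, _)]
  gcongr
  exact hdev.le

lemma tendsto_seqMass_average (hP : IsDist P) (f : 𝒳 → ℝ) {δ : ℝ} (hδ : 0 < δ) :
    Tendsto (fun m : ℕ => seqMass P {x : Fin m → 𝒳 | δ < |(∑ i, f (x i)) / m - expect P f|})
      atTop (𝓝 0) := by
  refine squeeze_zero' (.of_forall fun m => seqMass_nonneg hP _) ?_
    (tendsto_const_div_atTop_nhds_zero_nat (varD P f / δ ^ 2))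
  filter_upwards [eventually_gt_atTop 0] with m hm
  have hm : (0 : ℝ) < m := Nat.cast_pos.2 hm
  have hset : {x : Fin m → 𝒳 | δ < |(∑ i, f (x i)) / m - expect P f|} =
      {x | m * δ < |∑ i, (f (x i) - expect P f)|} := by
    ext x
    have : ∑ i, (f (x i) - expect P f) = m * ((∑ i, f (x i)) / m - expect P f) := by
      rw [Finset.sum_sub_distrib, Finset.sum_const, Finset.card_univ, Fintype.card_fin,
        nsmul_eq_mul, mul_sub, mul_div_cancel₀ _ hm.ne']
    rw [Set.mem_ofPred_eq, Set.mem_ofPred_eq, this, abs_mul, abs_of_pos hm,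
      mul_lt_mul_iff_right₀ hm]
  rw [hset]
  refine (seqMass_chebyshev hP f (by positivity) m).trans_eq ?_
  field_simp

end SequenceProbability

section Typicality

variable {𝒳 : Type*} [DecidableEq 𝒳] {P Q : 𝒳 → ℝ} {η : ℝ} {m : ℕ} {x : Fin m → 𝒳}

/-- The strongly typical sequences of length `m`: every symbol occurs with its `P`-probability up to
a relative error `η`, so symbols of probability `0` do not occur. -/
def typicalSet (P : 𝒳 → ℝ) (η : ℝ) (m : ℕ) : Set (Fin m → 𝒳) :=
  {x | ∀ a, |empDist x a - P a| ≤ η * P a}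

lemma empDist_apply_ne_zero (x : Fin m → 𝒳) (i : Fin m) : empDist x (x i) ≠ 0 := by
  have : NeZero m := ⟨i.pos.ne'⟩
  have hcard : (Finset.univ.filter fun j => x j = x i).card ≠ 0 :=
    Finset.card_ne_zero.2 ⟨i, by simp⟩
  exact div_ne_zero (Nat.cast_ne_zero.2 hcard) (NeZero.ne _)

lemma exists_eq_of_empDist_ne_zero {a : 𝒳} (ha : empDist x a ≠ 0) : ∃ i, x i = a := by
  contrapose! ha
  simp [empDist, ha]

lemma empDist_eq_sum_div (x : Fin m → 𝒳) (a : 𝒳) :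
    empDist x a = (∑ i, if x i = a then (1 : ℝ) else 0) / m := by
  rw [empDist, Finset.sum_boole]

lemma apply_ne_zero_of_mem_typicalSet (hx : x ∈ typicalSet P η m) (i : Fin m) : P (x i) ≠ 0 := by
  intro h0
  have := hx (x i)
  rw [h0, mul_zero, sub_zero, abs_nonpos_iff] at this
  exact empDist_apply_ne_zero x i this

lemma exists_eq_of_mem_typicalSet (hη : η < 1) (hx : x ∈ typicalSet P η m) {a : 𝒳}
    (ha : 0 < P a) : ∃ i, x i = a := by
  refine exists_eq_of_empDist_ne_zero fun h0 => ?_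
  have := hx a
  rw [h0, zero_sub, abs_neg, abs_of_pos ha] at this
  nlinarith

variable [Fintype 𝒳]

lemma seqProb_eq_exp (hx : ∀ i, 0 < Q (x i)) :
    seqProb Q x = Real.exp (-(m * crossEntropy (empDist x) Q)) := by
  rcases m.eq_zero_or_pos with rfl | hm
  · simp [seqProb]
  have hlog : ∑ i, Real.log (Q (x i)) = -(m * crossEntropy (empDist x) Q) := by
    calc ∑ i, Real.log (Q (x i))
        = ∑ i, ∑ a, (if x i = a then 1 else 0) * Real.log (Q a) := by simp
      _ = ∑ a, m * (empDist x a * Real.log (Q a)) := by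
        rw [Finset.sum_comm]
        refine Finset.sum_congr rfl fun a _ => ?_
        rw [← Finset.sum_mul, empDist_eq_sum_div]
        field_simp
      _ = _ := by rw [← Finset.mul_sum, crossEntropy, mul_neg, neg_neg]
  rw [← hlog, Real.exp_sum]
  exact Finset.prod_congr rfl fun i _ => (Real.exp_log (hx i)).symm

lemma crossEntropy_empDist_ge (hQ : IsDist Q) (hx : x ∈ typicalSet P η m) :
    (1 - η) * crossEntropy P Q ≤ crossEntropy (empDist x) Q := by
  simp only [crossEntropy_eq_sum, Finset.mul_sum, ← mul_assoc]
  gcongr with a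
  · exact hQ.neg_log_nonneg a
  · linarith [(abs_le.1 (hx a)).1]

lemma crossEntropy_empDist_le (hQ : IsDist Q) (hx : x ∈ typicalSet P η m) :
    crossEntropy (empDist x) Q ≤ (1 + η) * crossEntropy P Q := by
  simp only [crossEntropy_eq_sum, Finset.mul_sum, ← mul_assoc]
  gcongr with a
  · exact hQ.neg_log_nonneg a
  · linarith [(abs_le.1 (hx a)).2]

lemma seqProb_le_exp_of_mem_typicalSet (hQ : IsDist Q) (hx : x ∈ typicalSet P η m) :
    seqProb Q x ≤ Real.exp (-(m * ((1 - η) * crossEntropy P Q))) := by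
  by_cases h0 : seqProb Q x = 0
  · exact h0 ▸ Real.exp_nonneg _
  · have hpos (i : Fin m) : 0 < Q (x i) :=
      (hQ.1 _).lt_of_ne' (Finset.prod_ne_zero_iff.1 h0 i (Finset.mem_univ i))
    rw [seqProb_eq_exp hpos]
    gcongr
    exact crossEntropy_empDist_ge hQ hx

lemma exp_le_seqProb_of_mem_typicalSet (hQ : IsDist Q) (hPQ : ∀ a, Q a = 0 → P a = 0)
    (hx : x ∈ typicalSet P η m) :
    Real.exp (-(m * ((1 + η) * crossEntropy P Q))) ≤ seqProb Q x := by
  have hpos (i : Fin m) : 0 < Q (x i) :=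
    (hQ.1 _).lt_of_ne' (mt (hPQ _) (apply_ne_zero_of_mem_typicalSet hx i))
  rw [seqProb_eq_exp hpos]
  gcongr
  exact crossEntropy_empDist_le hQ hx

lemma eq_zero_of_seqProb_ne_zero (hP : IsDist P) (hη : η < 1) (hx : x ∈ typicalSet P η m)
    (h0 : seqProb Q x ≠ 0) (a : 𝒳) (ha : Q a = 0) : P a = 0 := by
  by_contra hPa
  obtain ⟨i, rfl⟩ := exists_eq_of_mem_typicalSet hη hx ((hP.1 a).lt_of_ne' hPa)
  exact h0 (Finset.prod_eq_zero (Finset.mem_univ i) ha)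

lemma seqMass_empDist_ne_zero_eq_zero {a : 𝒳} (ha : P a = 0) (m : ℕ) :
    seqMass P {x : Fin m → 𝒳 | empDist x a ≠ 0} = 0 := by
  refine Finset.sum_eq_zero fun x _ => Set.indicator_apply_eq_zero.2 fun hx => ?_
  obtain ⟨i, rfl⟩ := exists_eq_of_empDist_ne_zero hx
  exact Finset.prod_eq_zero (Finset.mem_univ i) ha

lemma tendsto_seqMass_empDist (hP : IsDist P) (hη : 0 < η) (a : 𝒳) :
    Tendsto (fun m : ℕ => seqMass P {x : Fin m → 𝒳 | η * P a < |empDist x a - P a|})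
      atTop (𝓝 0) := by
  rcases (hP.1 a).eq_or_lt with h0 | hpos
  · simp only [← h0, mul_zero, sub_zero, abs_pos, seqMass_empDist_ne_zero_eq_zero h0.symm,
      tendsto_const_nhds]
  · have hmean : expect P (fun b => if b = a then 1 else 0) = P a := by simp [expect]
    simpa only [empDist_eq_sum_div, hmean] using
      tendsto_seqMass_average hP (fun b => if b = a then 1 else 0) (mul_pos hη hpos)

lemma tendsto_seqMass_compl_typicalSet (hP : IsDist P) (hη : 0 < η) :
    Tendsto (fun m : ℕ => seqMass P (typicalSet P η m)ᶜ) atTop (𝓝 0) := by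
  have hcompl (m : ℕ) : (typicalSet P η m)ᶜ =
      ⋃ a, {x : Fin m → 𝒳 | η * P a < |empDist x a - P a|} := by
    ext x
    simp [typicalSet]
  have hsum := tendsto_finsetSum Finset.univ fun a _ => tendsto_seqMass_empDist hP hη a
  rw [Finset.sum_const_zero] at hsum
  refine squeeze_zero (fun m => seqMass_nonneg hP _) (fun m => ?_) hsum
  exact hcompl m ▸ seqMass_iUnion_le hP _

end Typicality

section ChangeOfMeasure

variable {𝒳 : Type*} [Fintype 𝒳] [DecidableEq 𝒳] {P1 P2 Q : 𝒳 → ℝ} {α η : ℝ} {m n : ℕ}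
  {x : Fin m → 𝒳} {y : Fin n → 𝒳}

lemma seqProb_mul_le_exp_mul_mix (hα : 0 < α) (h1 : IsDist P1) (h2 : IsDist P2)
    (hx : x ∈ typicalSet P1 η m) (hy : y ∈ typicalSet P2 η n) :
    seqProb P1 x * seqProb P2 y ≤
      Real.exp ((1 + η) *
          (m * crossEntropy P1 (mix P1 P2 α) + n * crossEntropy P2 (mix P1 P2 α)) -
          (1 - η) * (m * crossEntropy P1 P1 + n * crossEntropy P2 P2)) *
        (seqProb (mix P1 P2 α) x * seqProb (mix P1 P2 α) y) := by
  have hM := h1.mix hα h2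
  calc seqProb P1 x * seqProb P2 y
      ≤ Real.exp (-(m * ((1 - η) * crossEntropy P1 P1))) *
          Real.exp (-(n * ((1 - η) * crossEntropy P2 P2))) :=
        mul_le_mul (seqProb_le_exp_of_mem_typicalSet h1 hx)
          (seqProb_le_exp_of_mem_typicalSet h2 hy) (seqProb_nonneg h2 y) (Real.exp_nonneg _)
    _ = Real.exp ((1 + η) *
            (m * crossEntropy P1 (mix P1 P2 α) + n * crossEntropy P2 (mix P1 P2 α)) -
            (1 - η) * (m * crossEntropy P1 P1 + n * crossEntropy P2 P2)) *
          (Real.exp (-(m * ((1 + η) * crossEntropy P1 (mix P1 P2 α)))) *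
            Real.exp (-(n * ((1 + η) * crossEntropy P2 (mix P1 P2 α))))) := by
        simp only [← Real.exp_add]
        ring_nf
    _ ≤ _ := by
        gcongr
        · exact seqProb_nonneg hM x
        · exact exp_le_seqProb_of_mem_typicalSet hM (left_eq_zero_of_mix_eq_zero hα h1 h2) hx
        · exact exp_le_seqProb_of_mem_typicalSet hM (right_eq_zero_of_mix_eq_zero hα h1 h2) hy

lemma seqProb_mul_le_exp_crossEntropy_mix (hα : 0 < α) (h1 : IsDist P1) (h2 : IsDist P2)
    (hQ : IsDist Q) (hη : η < 1) (hmn : α * n ≤ m)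
    (hx : x ∈ typicalSet P1 η m) (hy : y ∈ typicalSet P2 η n) :
    seqProb Q x * seqProb Q y ≤ Real.exp (-((1 - η) *
      (n * (α * crossEntropy P1 (mix P1 P2 α) + crossEntropy P2 (mix P1 P2 α))))) := by
  by_cases h0 : seqProb Q x * seqProb Q y = 0
  · exact h0 ▸ Real.exp_nonneg _
  have hac (a : 𝒳) (ha : Q a = 0) : mix P1 P2 α a = 0 :=
    (mix_eq_zero_iff hα (h1.1 a) (h2.1 a)).2
      ⟨eq_zero_of_seqProb_ne_zero h1 hη hx (left_ne_zero_of_mul h0) a ha,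
        eq_zero_of_seqProb_ne_zero h2 hη hy (right_ne_zero_of_mul h0) a ha⟩
  have hgibbs : α * crossEntropy P1 (mix P1 P2 α) + crossEntropy P2 (mix P1 P2 α) ≤
      α * crossEntropy P1 Q + crossEntropy P2 Q := by
    rw [← crossEntropy_mix hα, ← crossEntropy_mix hα]
    gcongr
    exact crossEntropy_self_le (h1.mix hα h2) hQ hac
  calc seqProb Q x * seqProb Q y
      ≤ Real.exp (-(m * ((1 - η) * crossEntropy P1 Q))) *
          Real.exp (-(n * ((1 - η) * crossEntropy P2 Q))) :=
        mul_le_mul (seqProb_le_exp_of_mem_typicalSet hQ hx)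
          (seqProb_le_exp_of_mem_typicalSet hQ hy) (seqProb_nonneg hQ y) (Real.exp_nonneg _)
    _ = Real.exp (-((1 - η) * (m * crossEntropy P1 Q + n * crossEntropy P2 Q))) := by
        rw [← Real.exp_add]
        ring_nf
    _ ≤ _ := by
        gcongr
        calc _ ≤ n * (α * crossEntropy P1 Q + crossEntropy P2 Q) := by gcongr
          _ = α * n * crossEntropy P1 Q + n * crossEntropy P2 Q := by ring
          _ ≤ _ := by
            gcongr
            exact crossEntropy_nonneg h1 hQ

lemma seqProb_mul_le_exp_mul (hα : 0 < α) (h1 : IsDist P1) (h2 : IsDist P2)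
    (hQ : IsDist Q) (hη : η < 1) (hmn : α * n ≤ m)
    (hx : x ∈ typicalSet P1 η m) (hy : y ∈ typicalSet P2 η n) :
    seqProb Q x * seqProb Q y ≤
      Real.exp ((1 + η) * (m * crossEntropy P1 P1 + n * crossEntropy P2 P2) - (1 - η) *
          (n * (α * crossEntropy P1 (mix P1 P2 α) + crossEntropy P2 (mix P1 P2 α)))) *
        (seqProb P1 x * seqProb P2 y) := by
  refine (seqProb_mul_le_exp_crossEntropy_mix hα h1 h2 hQ hη hmn hx hy).trans ?_
  calc _ = Real.exp ((1 + η) * (m * crossEntropy P1 P1 + n * crossEntropy P2 P2) - (1 - η) *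
          (n * (α * crossEntropy P1 (mix P1 P2 α) + crossEntropy P2 (mix P1 P2 α)))) *
        (Real.exp (-(m * ((1 + η) * crossEntropy P1 P1))) *
          Real.exp (-(n * ((1 + η) * crossEntropy P2 P2)))) := by
        simp only [← Real.exp_add]
        ring_nf
    _ ≤ _ := by
        gcongr
        · exact seqProb_nonneg h1 x
        · exact exp_le_seqProb_of_mem_typicalSet h1 (fun _ => id) hx
        · exact exp_le_seqProb_of_mem_typicalSet h2 (fun _ => id) hy

lemma tendsto_trainLen_atTop (hα : 0 < α) : Tendsto (trainLen α) atTop atTop :=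
  tendsto_nat_ceil_atTop.comp (tendsto_natCast_atTop_atTop.const_mul_atTop hα)

lemma eventually_apply_trainLen_div_lt (hα : 0 ≤ α) {F : ℝ × ℝ → ℝ} (hF : Continuous F) {c : ℝ}
    (hc : F (0, α) < c) :
    ∀ᶠ η in 𝓝[>] (0 : ℝ), ∀ᶠ n : ℕ in atTop, F (η, trainLen α n / n) < c := by
  have hratio : Tendsto (fun n : ℕ => (trainLen α n : ℝ) / n) atTop (𝓝 α) :=
    (tendsto_nat_ceil_mul_div_atTop hα).comp tendsto_natCast_atTop_atTop
  have hnear : ∀ᶠ p in 𝓝 (0 : ℝ) ×ˢ 𝓝 α, F p < c := by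
    rw [← nhds_prod_eq]
    exact hF.continuousAt.eventually_lt_const hc
  filter_upwards [nhdsWithin_le_nhds hnear.curry] with η hη using hratio.eventually hη

lemma eventually_seqProb_mul_le_exp_mul_mix (hα : 0 < α) (h1 : IsDist P1) (h2 : IsDist P2)
    {c : ℝ} (hc : GJS P1 P2 α < c) :
    ∀ᶠ η in 𝓝[>] (0 : ℝ), ∀ᶠ n : ℕ in atTop,
      ∀ x ∈ typicalSet P1 η (trainLen α n), ∀ y ∈ typicalSet P2 η n,
        seqProb P1 x * seqProb P2 y ≤
          Real.exp (n * c) * (seqProb (mix P1 P2 α) x * seqProb (mix P1 P2 α) y) := by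
  have hM := h1.mix hα h2
  have hrate := eventually_apply_trainLen_div_lt hα.le (c := c) (F := fun p =>
    (1 + p.1) * (p.2 * crossEntropy P1 (mix P1 P2 α) + crossEntropy P2 (mix P1 P2 α)) -
      (1 - p.1) * (p.2 * crossEntropy P1 P1 + crossEntropy P2 P2)) (by fun_prop)
    (by simpa [GJS_eq_crossEntropy_sub hα h1 h2] using hc)
  filter_upwards [hrate] with η hη
  filter_upwards [hη, eventually_gt_atTop 0] with n hn hn0 x hx y hy
  have hn0 : (0 : ℝ) < n := Nat.cast_pos.2 hn0
  refine (seqProb_mul_le_exp_mul_mix hα h1 h2 hx hy).trans ?_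
  gcongr
  · exact mul_nonneg (seqProb_nonneg hM x) (seqProb_nonneg hM y)
  · refine le_of_eq_of_le ?_ (mul_le_mul_of_nonneg_left hn.le hn0.le)
    field_simp

lemma eventually_seqProb_mul_le_exp_neg_mul (hα : 0 < α) (h1 : IsDist P1) (h2 : IsDist P2)
    {c : ℝ} (hc : c < GJS P1 P2 α) :
    ∀ᶠ η in 𝓝[>] (0 : ℝ), ∀ᶠ n : ℕ in atTop,
      ∀ x ∈ typicalSet P1 η (trainLen α n), ∀ y ∈ typicalSet P2 η n,
        ∀ Q, IsDist Q → seqProb Q x * seqProb Q y ≤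
          Real.exp (-(n * c)) * (seqProb P1 x * seqProb P2 y) := by
  have hrate := eventually_apply_trainLen_div_lt hα.le (c := -c) (F := fun p =>
    (1 + p.1) * (p.2 * crossEntropy P1 P1 + crossEntropy P2 P2) -
      (1 - p.1) * (α * crossEntropy P1 (mix P1 P2 α) + crossEntropy P2 (mix P1 P2 α)))
    (by fun_prop) (by
      rw [GJS_eq_crossEntropy_sub hα h1 h2] at hc
      simp only [add_zero, sub_zero, one_mul]
      linarith)
  filter_upwards [hrate, nhdsWithin_le_nhds (eventually_lt_nhds one_pos)] with η hη hη1
  filter_upwards [hη, eventually_gt_atTop 0] with n hn hn0 x hx y hy Q hQ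
  have hn0 : (0 : ℝ) < n := Nat.cast_pos.2 hn0
  refine (seqProb_mul_le_exp_mul (m := trainLen α n) hα h1 h2 hQ hη1 (Nat.le_ceil _) hx hy).trans
    (mul_le_mul_of_nonneg_right (Real.exp_le_exp.2 ?_)
      (mul_nonneg (seqProb_nonneg h1 x) (seqProb_nonneg h2 y)))
  rw [← mul_neg]
  refine le_of_eq_of_le ?_ (mul_le_mul_of_nonneg_left hn.le hn0.le)
  field_simp

end ChangeOfMeasure

section ErrorProbabilities

variable {𝒳 : Type*} [Fintype 𝒳] {P1 P2 Q Q1 Q2 : 𝒳 → ℝ} {α K : ℝ} {n : ℕ}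
  {S : Set (Fin (trainLen α n) → 𝒳)} {T : Set (Fin n → 𝒳)}

lemma sum_sum_sum_mul {A B C R : Type*} [Fintype A] [Fintype B] [Fintype C]
    [NonUnitalSemiring R] (f : A → R) (g : B → R) (h : C → R) :
    ∑ a, ∑ b, ∑ c, f a * g b * h c = (∑ a, f a) * (∑ b, g b) * ∑ c, h c := by
  simp only [← Finset.mul_sum, ← Finset.sum_mul]

lemma seqMass_compl_add_eq_sum (h1 : IsDist P1) (h2 : IsDist P2)
    (S : Set (Fin (trainLen α n) → 𝒳)) (T : Set (Fin n → 𝒳)) :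
    seqMass P1 Sᶜ + seqMass P2 Tᶜ =
      ∑ x1, ∑ x2 : Fin (trainLen α n) → 𝒳, ∑ y,
        (Sᶜ.indicator (seqProb P1) x1 * seqProb P2 x2 * seqProb P2 y +
          seqProb P1 x1 * seqProb P2 x2 * Tᶜ.indicator (seqProb P2) y) := by
  simp only [Finset.sum_add_distrib, sum_sum_sum_mul, sum_seqProb h1, sum_seqProb h2, mul_one,
    one_mul, seqMass]

lemma one_le_beta2_add_mul_beta1 (h1 : IsDist P1) (h2 : IsDist P2) (hQ : IsDist Q) (hK : 0 ≤ K)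
    (hST : ∀ x ∈ S, ∀ y ∈ T, seqProb P1 x * seqProb P2 y ≤ K * (seqProb Q x * seqProb Q y))
    (φ : BTest 𝒳 α n) :
    1 ≤ beta2 φ P1 P2 + K * beta1 φ Q P2 + (seqMass P1 Sᶜ + seqMass P2 Tᶜ) := by
  have hone := sum_sum_sum_mul (seqProb P1 (m := trainLen α n))
    (seqProb P2 (m := trainLen α n)) (seqProb P2 (m := n))
  rw [sum_seqProb h1, sum_seqProb h2, sum_seqProb h2, mul_one, mul_one] at hone
  rw [← hone, seqMass_compl_add_eq_sum h1 h2, beta1, beta2]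
  simp only [Finset.mul_sum, ← Finset.sum_add_distrib]
  gcongr with x1 _ x2 _ y _
  have hx1 := seqProb_nonneg h1 x1
  have hx2 := seqProb_nonneg h2 x2
  have hPy := seqProb_nonneg h2 y
  have hQx1 := seqProb_nonneg hQ x1
  have hQy := seqProb_nonneg hQ y
  have hS : 0 ≤ Sᶜ.indicator (seqProb P1) x1 :=
    Set.indicator_nonneg (fun z _ => seqProb_nonneg h1 z) x1
  have hT : 0 ≤ Tᶜ.indicator (seqProb P2) y :=
    Set.indicator_nonneg (fun z _ => seqProb_nonneg h2 z) y
  by_cases hx : x1 ∈ S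
  · by_cases hy : y ∈ T
    · refine le_add_of_le_of_nonneg ?_ (by positivity)
      cases φ x1 x2 y
      · simp
      · calc seqProb P1 x1 * seqProb P2 x2 * seqProb P2 y
            = seqProb P2 x2 * (seqProb P1 x1 * seqProb P2 y) := by ring
          _ ≤ seqProb P2 x2 * (K * (seqProb Q x1 * seqProb Q y)) :=
            mul_le_mul_of_nonneg_left (hST x1 hx y hy) hx2
          _ = _ := by
            rw [if_neg (by decide), if_pos rfl]
            ring
    · rw [Set.indicator_of_mem (Set.mem_compl hy)]
      exact le_add_of_nonneg_of_le (by positivity) (le_add_of_nonneg_left (by positivity))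
  · rw [Set.indicator_of_mem (Set.mem_compl hx)]
    exact le_add_of_nonneg_of_le (by positivity) (le_add_of_nonneg_right (by positivity))

open Classical in
/-- The test that declares `H₂` exactly when the first training sequence lies in `S` and the test
sequence lies in `T`. -/
noncomputable def rectangleTest (S : Set (Fin (trainLen α n) → 𝒳)) (T : Set (Fin n → 𝒳)) :
    BTest 𝒳 α n :=
  fun x1 _ y => decide (x1 ∈ S ∧ y ∈ T)

lemma beta1_rectangleTest_le (h1 : IsDist P1) (h2 : IsDist P2) (hQ2 : IsDist Q2) (hK : 0 ≤ K)
    (hST : ∀ x ∈ S, ∀ y ∈ T, seqProb Q1 x * seqProb Q1 y ≤ K * (seqProb P1 x * seqProb P2 y)) :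
    beta1 (rectangleTest S T) Q1 Q2 ≤ K := by
  have hsum : ∑ x1, ∑ x2, ∑ y,
      K * (seqProb P1 (m := trainLen α n) x1 * seqProb Q2 (m := trainLen α n) x2 *
        seqProb P2 (m := n) y) = K := by
    simp only [← Finset.mul_sum, sum_seqProb h1, sum_seqProb hQ2, sum_seqProb h2, mul_one]
  refine le_of_le_of_eq ?_ hsum
  unfold beta1
  gcongr with x1 _ x2 _ y _
  have hx2 := seqProb_nonneg hQ2 x2
  split_ifs with h
  · obtain ⟨hx, hy⟩ : x1 ∈ S ∧ y ∈ T := by simpa [rectangleTest] using h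
    calc seqProb Q1 x1 * seqProb Q2 x2 * seqProb Q1 y
        = seqProb Q2 x2 * (seqProb Q1 x1 * seqProb Q1 y) := by ring
      _ ≤ seqProb Q2 x2 * (K * (seqProb P1 x1 * seqProb P2 y)) :=
        mul_le_mul_of_nonneg_left (hST x1 hx y hy) hx2
      _ = K * (seqProb P1 x1 * seqProb Q2 x2 * seqProb P2 y) := by ring
  · have hx1 := seqProb_nonneg h1 x1
    have hy := seqProb_nonneg h2 y
    positivity

lemma beta2_rectangleTest_le (h1 : IsDist P1) (h2 : IsDist P2) :
    beta2 (rectangleTest S T) P1 P2 ≤ seqMass P1 Sᶜ + seqMass P2 Tᶜ := by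
  rw [seqMass_compl_add_eq_sum h1 h2, beta2]
  gcongr with x1 _ x2 _ y _
  have hx1 := seqProb_nonneg h1 x1
  have hx2 := seqProb_nonneg h2 x2
  have hy := seqProb_nonneg h2 y
  by_cases hxS : x1 ∈ S <;> by_cases hyT : y ∈ T <;>
    simp [rectangleTest, hxS, hyT, mul_nonneg, hx1, hx2, hy]

end ErrorProbabilities

section Exponents

variable {𝒳 : Type*} [Fintype 𝒳] {P1 P2 : 𝒳 → ℝ} {α ε c : ℝ}

/-- The type-I exponents achievable at blocklength `n` by a test with type-II error at most `ε`
under `(P1, P2)`; its supremum is `lamStar`. -/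
def achievableExponents (α : ℝ) (n : ℕ) (ε : ℝ) (P1 P2 : 𝒳 → ℝ) : Set ℝ :=
  {lam | 0 ≤ lam ∧ ∃ φ : BTest 𝒳 α n,
    (∀ Q1 Q2 : 𝒳 → ℝ, IsDist Q1 → IsDist Q2 → beta1 φ Q1 Q2 ≤ Real.exp (-((n : ℝ) * lam))) ∧
    beta2 φ P1 P2 ≤ ε}

lemma tendsto_seqMass_compl_typicalSet_add [DecidableEq 𝒳] (hα : 0 < α) (h1 : IsDist P1)
    (h2 : IsDist P2) {η : ℝ} (hη : 0 < η) :
    Tendsto (fun n : ℕ => seqMass P1 (typicalSet P1 η (trainLen α n))ᶜ +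
      seqMass P2 (typicalSet P2 η n)ᶜ) atTop (𝓝 0) := by
  simpa only [add_zero, Function.comp_def] using
    ((tendsto_seqMass_compl_typicalSet h1 hη).comp (tendsto_trainLen_atTop hα)).add
      (tendsto_seqMass_compl_typicalSet h2 hη)

lemma eventually_mem_upperBounds_achievableExponents (hα : 0 < α) (hε : ε < 1) (h1 : IsDist P1)
    (h2 : IsDist P2) (hc : GJS P1 P2 α < c) :
    ∀ᶠ n : ℕ in atTop, c ∈ upperBounds (achievableExponents α n ε P1 P2) := by
  classical
  obtain ⟨d, hd, hdc⟩ := exists_between hc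
  obtain ⟨η, hbound, hη⟩ :=
    ((eventually_seqProb_mul_le_exp_mul_mix hα h1 h2 hd).and self_mem_nhdsWithin).exists
  have hdecay : Tendsto (fun n : ℕ => Real.exp (-(n * (c - d)))) atTop (𝓝 0) :=
    Real.tendsto_exp_neg_atTop_nhds_zero.comp
      (tendsto_natCast_atTop_atTop.atTop_mul_const (sub_pos.2 hdc))
  have herror := (hdecay.const_add ε).add (tendsto_seqMass_compl_typicalSet_add hα h1 h2 hη)
  rw [add_zero, add_zero] at herror
  filter_upwards [hbound, herror.eventually_lt_const hε] with n hbound herror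
  rintro lam ⟨-, φ, hβ1, hβ2⟩
  by_contra! hlam
  refine herror.not_ge ?_
  calc (1 : ℝ)
      ≤ beta2 φ P1 P2 + Real.exp (n * d) * beta1 φ (mix P1 P2 α) P2 +
          (seqMass P1 (typicalSet P1 η (trainLen α n))ᶜ + seqMass P2 (typicalSet P2 η n)ᶜ) :=
        one_le_beta2_add_mul_beta1 h1 h2 (h1.mix hα h2) (Real.exp_nonneg _) hbound φ
    _ ≤ ε + Real.exp (n * d) * Real.exp (-(n * c)) +
          (seqMass P1 (typicalSet P1 η (trainLen α n))ᶜ + seqMass P2 (typicalSet P2 η n)ᶜ) := by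
        gcongr
        refine (hβ1 _ _ (h1.mix hα h2) h2).trans ?_
        gcongr
    _ = _ := by
        rw [← Real.exp_add]
        ring_nf

lemma eventually_mem_achievableExponents (hα : 0 < α) (hε : 0 < ε) (h1 : IsDist P1)
    (h2 : IsDist P2) (hc0 : 0 ≤ c) (hc : c < GJS P1 P2 α) :
    ∀ᶠ n : ℕ in atTop, c ∈ achievableExponents α n ε P1 P2 := by
  classical
  obtain ⟨η, hbound, hη⟩ :=
    ((eventually_seqProb_mul_le_exp_neg_mul hα h1 h2 hc).and self_mem_nhdsWithin).exists
  filter_upwards [hbound,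
    (tendsto_seqMass_compl_typicalSet_add hα h1 h2 hη).eventually_le_const hε] with n hbound herror
  exact ⟨hc0, rectangleTest (typicalSet P1 η (trainLen α n)) (typicalSet P2 η n),
    fun Q1 Q2 hQ1 hQ2 => beta1_rectangleTest_le h1 h2 hQ2 (Real.exp_nonneg _)
      fun x hx y hy => hbound x hx y hy Q1 hQ1,
    (beta2_rectangleTest_le h1 h2).trans herror⟩

theorem lamStar_strong_converse_general (hα : 0 < α) (hε : ε ∈ Set.Ioo (0 : ℝ) 1)
    (h1 : IsDist P1) (h2 : IsDist P2) :
    Tendsto (fun n : ℕ => lamStar α n ε P1 P2) atTop (𝓝 (GJS P1 P2 α)) := by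
  refine tendsto_order.2 ⟨fun b hb => ?_, fun b hb => ?_⟩
  · obtain ⟨c, hbc, hc⟩ := exists_between hb
    rcases lt_or_ge c 0 with hc0 | hc0
    · exact .of_forall fun n => (hbc.trans hc0).trans_le (Real.sSup_nonneg fun lam hlam => hlam.1)
    · filter_upwards [eventually_mem_achievableExponents hα hε.1 h1 h2 hc0 hc,
        eventually_mem_upperBounds_achievableExponents hα hε.2 h1 h2
          (lt_add_one (GJS P1 P2 α))] with n hmem hbdd
      exact hbc.trans_le (le_csSup ⟨_, hbdd⟩ hmem)
  · obtain ⟨c, hc, hcb⟩ := exists_between hb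
    filter_upwards [eventually_mem_upperBounds_achievableExponents hα hε.2 h1 h2 hc] with n hbdd
    exact (Real.sSup_le hbdd ((GJS_nonneg hα h1 h2).trans hc.le)).trans_lt hcb

end Exponents

/-- strong converse: for any `ε ∈ (0,1)`,
`λ*(n,α,ε|P1,P2) → GJS(P1,P2,α)` as `n → ∞`. -/
theorem lamStar_strong_converse {X : Type*} [Fintype X] [DecidableEq X]
    (α ε : ℝ) (hα : 0 < α) (hε : ε ∈ Set.Ioo (0 : ℝ) 1)
    (P1 P2 : X → ℝ) (h1 : IsDist P1) (h2 : IsDist P2)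
    (hV : 0 < disp P1 P2 α) :
    Filter.Tendsto (fun n : ℕ => lamStar α n ε P1 P2) Filter.atTop
      (nhds (GJS P1 P2 α)) := by
  exact lamStar_strong_converse_general hα hε h1 h2

end Classification
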